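/- arXiv:1701.06241 — 3 statements merged into one kernel-verified Lean document; each statement's English description precedes it below -/
import Mathlib

section
/- Let α, β : ℕ → ℝ be sequences such that α is strictly increasing (α(h) < α(h+1) for all h) and concave as a sequence (α(h+1) − α(h) ≤ α(h) − α(h−1) for all h ≥ 1), and β is affine with nonnegative slope (there exists d ≥ 0 with β(h+1) − β(h) = d for all h). Let r, c, W be real numbers with W + c > 0, and define φ(h) = (W + c)·(β(h) − β(h−1)) / (α(h) − α(h−1)) for h ≥ 1. If h₀ ≥ 1 satisfies φ(h₀) < r + c ≤ φ(h₀ + 1), then h₀ is a global maximizer of the objective f(h) = (r + c)·α(h) − (W + c)·β(h): for every h ∈ ℕ, f(h) ≤ f(h₀). -/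
/-!
Passing from threshold `n` to `n + 1` changes the objective by `Δα(n) * (r + c - φ(n + 1))`, and
`Δα > 0`, so the sign of the change is that of `r + c - φ(n + 1)`. Concavity of `α`, convexity and
monotonicity of `β`, and `W + c ≥ 0` make `φ` nondecreasing. Hence the objective
increases as long as `φ` stays below `r + c` and decreases afterwards, and its maximum is where `φ`
crosses the level `r + c`.
-/

section MarginalCost

open Set
open scoped fwdDiff

variable {K : Type*} [Field K] {α γ : ℕ → K}

/-- The marginal cost, per unit of gain in `α`, of passing from `n` to `n + 1` when `γ` is the
cost. For `γ = (W + c) β` it is the paper's `φ (n + 1)`: the index is shifted by one so that no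
truncated subtraction occurs. -/
def marginalCost (γ α : ℕ → K) (n : ℕ) : K :=
  Δ_[1] γ n / Δ_[1] α n

theorem marginalCost_const_smul (q : K) (γ α : ℕ → K) :
    marginalCost (q • γ) α = q • marginalCost γ α := by
  funext n
  simp only [marginalCost, fwdDiff_const_smul, Pi.smul_apply, smul_eq_mul, mul_div_assoc]

variable [LinearOrder K] [IsStrictOrderedRing K]

theorem monotone_marginalCost (hα : StrictMono α) (hα' : Antitone (Δ_[1] α))
    (hγ : Monotone γ) (hγ' : Monotone (Δ_[1] γ)) : Monotone (marginalCost γ α) :=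
  fun _ n hmn => div_le_div₀ (sub_nonneg.2 (hγ n.le_succ)) (hγ' hmn)
    (sub_pos.2 (hα n.lt_succ_self)) (hα' hmn)

theorem mul_sub_le_mul_sub_succ_iff {n : ℕ} (hα : α n < α (n + 1)) (p : K) :
    p * α n - γ n ≤ p * α (n + 1) - γ (n + 1) ↔ marginalCost γ α n ≤ p := by
  rw [marginalCost, fwdDiff, fwdDiff, div_le_iff₀ (sub_pos.2 hα), mul_sub]
  constructor <;> intro h <;> linarith

theorem mul_sub_succ_le_mul_sub_iff {n : ℕ} (hα : α n < α (n + 1)) (p : K) :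
    p * α (n + 1) - γ (n + 1) ≤ p * α n - γ n ↔ p ≤ marginalCost γ α n := by
  rw [marginalCost, fwdDiff, fwdDiff, le_div_iff₀ (sub_pos.2 hα), mul_sub]
  constructor <;> intro h <;> linarith

theorem isMaxOn_mul_sub_of_monotone_marginalCost (hα : StrictMono α)
    (hmono : Monotone (marginalCost γ α)) {p : K} {k : ℕ}
    (hk : marginalCost γ α k ≤ p) (hk' : p ≤ marginalCost γ α (k + 1)) :
    IsMaxOn (fun n => p * α n - γ n) univ (k + 1) := by
  refine isMaxOn_univ_of_mono_anti
    (monotoneOn_of_le_add_one ordConnected_Iic fun n _ _ hn => ?_)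
    (antitoneOn_of_add_one_le ordConnected_Ici fun n _ hn _ => ?_)
  · have hnk : n ≤ k := Nat.le_of_succ_le_succ hn
    exact (mul_sub_le_mul_sub_succ_iff (hα n.lt_succ_self) p).2 ((hmono hnk).trans hk)
  · exact (mul_sub_succ_le_mul_sub_iff (hα n.lt_succ_self) p).2 (hk'.trans (hmono hn))

theorem stmt1_general (α β : ℕ → K) (r c W : K)
    (hinc : ∀ h : ℕ, α h < α (h + 1))
    (hconc : ∀ h : ℕ, 1 ≤ h → α (h + 1) - α h ≤ α h - α (h - 1))
    (hmono : ∀ h : ℕ, β h ≤ β (h + 1))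
    (hconv : ∀ h : ℕ, 1 ≤ h → β h - β (h - 1) ≤ β (h + 1) - β h)
    (hWc : 0 ≤ W + c)
    (φ : ℕ → K)
    (hφ : ∀ h : ℕ, 1 ≤ h → φ h = (W + c) * (β h - β (h - 1)) / (α h - α (h - 1)))
    (h₀ : ℕ) (hh₀ : 1 ≤ h₀)
    (hle : φ h₀ ≤ r + c) (hge : r + c ≤ φ (h₀ + 1)) :
    ∀ h : ℕ, (r + c) * α h - (W + c) * β h ≤ (r + c) * α h₀ - (W + c) * β h₀ := by
  obtain ⟨k, rfl⟩ := Nat.exists_eq_add_of_le' hh₀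
  have hα : StrictMono α := strictMono_nat_of_lt_succ hinc
  have hα' : Antitone (Δ_[1] α) := antitone_nat_of_succ_le fun n => hconc (n + 1) n.succ_pos
  have hβ' : Monotone (Δ_[1] β) := monotone_nat_of_le_succ fun n => hconv (n + 1) n.succ_pos
  have hcost : Monotone (marginalCost ((W + c) • β) α) := by
    rw [marginalCost_const_smul]
    exact (monotone_marginalCost hα hα' (monotone_nat_of_le_succ hmono) hβ').const_mul hWc
  have hφ_succ (n : ℕ) : φ (n + 1) = marginalCost ((W + c) • β) α n := by
    rw [hφ (n + 1) n.succ_pos, marginalCost_const_smul, mul_div_assoc]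
    rfl
  rw [hφ_succ] at hle hge
  exact fun h => isMaxOn_mul_sub_of_monotone_marginalCost hα hcost hle hge (mem_univ h)

end MarginalCost

/-- Theorem 2: with α increasing concave, β affine with nonnegative slope,
φ(h) = (W+c)(β(h)−β(h−1))/(α(h)−α(h−1)); if φ(h₀) < r + c ≤ φ(h₀+1)
then h₀ globally maximizes f(h) = (r+c)·α(h) − (W+c)·β(h). -/
theorem stmt1 (α β : ℕ → ℝ) (r c W : ℝ)
    (hinc : ∀ h : ℕ, α h < α (h + 1))
    (hconc : ∀ h : ℕ, 1 ≤ h → α (h + 1) - α h ≤ α h - α (h - 1))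
    (haff : ∃ d : ℝ, 0 ≤ d ∧ ∀ h : ℕ, β (h + 1) - β h = d)
    (hWc : 0 < W + c)
    (φ : ℕ → ℝ)
    (hφ : ∀ h : ℕ, 1 ≤ h → φ h = (W + c) * (β h - β (h - 1)) / (α h - α (h - 1)))
    (h₀ : ℕ) (hh₀ : 1 ≤ h₀)
    (hlt : φ h₀ < r + c) (hge : r + c ≤ φ (h₀ + 1)) :
    ∀ h : ℕ, (r + c) * α h - (W + c) * β h ≤ (r + c) * α h₀ - (W + c) * β h₀ := by
  obtain ⟨d, hd, hβ⟩ := haff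
  exact stmt1_general α β r c W hinc hconc (fun h => sub_nonneg.1 (hd.trans_eq (hβ h).symm))
    (fun h hh => by rw [hβ, ← hβ (h - 1), Nat.sub_add_cancel hh]) hWc.le φ hφ h₀ hh₀ hlt.le hge
end

section
/- Let a, b : ℕ → ℝ with a strictly increasing (a(h) < a(h+1) for all h), let r, c, W be reals with W + c > 0, and define φ(h) = (W + c)·(b(h) − b(h−1)) / (a(h) − a(h−1)) for h ≥ 1. Suppose φ is non-decreasing on {h : h ≥ h₀ + 1} and r + c ≤ φ(h₀ + 1). Then for every h > h₀, (r + c)·a(h) − (W + c)·b(h) ≤ (r + c)·a(h₀) − (W + c)·b(h₀). -/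
section

variable {K : Type*} [Field K] [LinearOrder K] [IsStrictOrderedRing K]

theorem mul_sub_mul_le_mul_sub_mul_iff_le_div {p q x x' y y' : K} (hx : x < x') :
    p * x' - q * y' ≤ p * x - q * y ↔ p ≤ q * (y' - y) / (x' - x) := by
  rw [le_div_iff₀ (sub_pos.2 hx)]
  constructor <;> intro h <;> linarith

theorem antitoneOn_mul_sub_mul_of_le_div {a b : ℕ → K} {p q : K} {m : ℕ}
    (ha : ∀ n, m ≤ n → a n < a (n + 1))
    (hp : ∀ n, m ≤ n → p ≤ q * (b (n + 1) - b n) / (a (n + 1) - a n)) :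
    AntitoneOn (fun n ↦ p * a n - q * b n) (Set.Ici m) :=
  antitoneOn_nat_Ici_of_succ_le fun n hn ↦
    (mul_sub_mul_le_mul_sub_mul_iff_le_div (ha n hn)).2 (hp n hn)

theorem stmt2_general (a b : ℕ → K) (r c W : K) (h₀ : ℕ)
    (hinc : ∀ h : ℕ, h₀ ≤ h → a h < a (h + 1))
    (φ : ℕ → K)
    (hφ : ∀ h : ℕ, h₀ + 1 ≤ h → φ h = (W + c) * (b h - b (h - 1)) / (a h - a (h - 1)))
    (hφmono : MonotoneOn φ (Set.Ici (h₀ + 1)))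
    (hge : r + c ≤ φ (h₀ + 1)) :
    AntitoneOn (fun h ↦ (r + c) * a h - (W + c) * b h) (Set.Ici h₀) := by
  refine antitoneOn_mul_sub_mul_of_le_div hinc fun h hh ↦ ?_
  have hsucc : h₀ + 1 ≤ h + 1 := Nat.succ_le_succ hh
  calc r + c ≤ φ (h₀ + 1) := hge
    _ ≤ φ (h + 1) := hφmono Set.self_mem_Ici (Set.mem_Ici.2 hsucc) hsucc
    _ = (W + c) * (b (h + 1) - b h) / (a (h + 1) - a h) := hφ (h + 1) hsucc

end

/-- Induction (telescoping) step of Theorem 2: if φ is non-decreasing on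
{h : h ≥ h₀+1} and r + c ≤ φ(h₀+1), then h₀ dominates all larger thresholds. -/
theorem stmt2 (a b : ℕ → ℝ) (r c W : ℝ) (h₀ : ℕ)
    (hinc : ∀ h : ℕ, a h < a (h + 1))
    (hWc : 0 < W + c)
    (φ : ℕ → ℝ)
    (hφ : ∀ h : ℕ, 1 ≤ h → φ h = (W + c) * (b h - b (h - 1)) / (a h - a (h - 1)))
    (hφmono : MonotoneOn φ {h : ℕ | h₀ + 1 ≤ h})
    (hge : r + c ≤ φ (h₀ + 1)) :
    ∀ h : ℕ, h₀ < h →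
      (r + c) * a h - (W + c) * b h ≤ (r + c) * a h₀ - (W + c) * b h₀ :=
  fun _ hh ↦ stmt2_general a b r c W h₀ (fun h _ ↦ hinc h) φ
    (fun h hh₀ ↦ hφ h (Nat.one_le_of_lt hh₀)) hφmono hge Set.self_mem_Ici hh.le hh.le
end

section
/- Let a, b : ℕ → ℝ with a strictly increasing (a(h) < a(h+1) for all h), let r, c, W be reals with W + c > 0, and define φ(h) = (W + c)·(b(h) − b(h−1)) / (a(h) − a(h−1)) for h ≥ 1. Suppose φ is non-decreasing on {h : 1 ≤ h ≤ h₀} and φ(h₀) < r + c. Then for every h < h₀, (r + c)·a(h) − (W + c)·b(h) < (r + c)·a(h₀) − (W + c)·b(h₀). -/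
theorem mul_sub_mul_lt_mul_sub_mul_iff_div_lt {K : Type*} [Field K] [LinearOrder K]
    [IsStrictOrderedRing K] {x x' : K} (hx : x < x') (y y' p q : K) :
    p * x - q * y < p * x' - q * y' ↔ q * (y' - y) / (x' - x) < p := by
  rw [div_lt_iff₀ (sub_pos.mpr hx), mul_sub, mul_sub, sub_lt_sub_iff, sub_lt_sub_iff,
    add_comm (p * x)]

theorem stmt3_general {K : Type*} [Field K] [LinearOrder K] [IsStrictOrderedRing K]
    (a b : ℕ → K) (p q : K) (h₀ : ℕ)
    (hinc : ∀ h < h₀, a h < a (h + 1))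
    (φ : ℕ → K)
    (hφ : ∀ h ∈ Set.Icc 1 h₀, φ h = q * (b h - b (h - 1)) / (a h - a (h - 1)))
    (hlt : ∀ h ∈ Set.Icc 1 h₀, φ h < p) :
    StrictMonoOn (fun h ↦ p * a h - q * b h) (Set.Iic h₀) := by
  refine strictMonoOn_Iic_of_lt_succ fun k hk ↦ ?_
  have hk_mem : k + 1 ∈ Set.Icc 1 h₀ := ⟨Nat.le_add_left 1 k, hk⟩
  have hmarginal : q * (b (k + 1) - b k) / (a (k + 1) - a k) < p := by
    simpa only [hφ (k + 1) hk_mem, Nat.add_sub_cancel] using hlt (k + 1) hk_mem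
  exact (mul_sub_mul_lt_mul_sub_mul_iff_div_lt (hinc k hk) _ _ p q).mpr hmarginal

/-- Step of Theorem 2: if φ is non-decreasing on {h : 1 ≤ h ≤ h₀} and
φ(h₀) < r + c, then h₀ strictly dominates all smaller thresholds. -/
theorem stmt3 (a b : ℕ → ℝ) (r c W : ℝ) (h₀ : ℕ)
    (hinc : ∀ h : ℕ, a h < a (h + 1))
    (hWc : 0 < W + c)
    (φ : ℕ → ℝ)
    (hφ : ∀ h : ℕ, 1 ≤ h → φ h = (W + c) * (b h - b (h - 1)) / (a h - a (h - 1)))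
    (hφmono : MonotoneOn φ {h : ℕ | 1 ≤ h ∧ h ≤ h₀})
    (hlt : φ h₀ < r + c) :
    ∀ h : ℕ, h < h₀ →
      (r + c) * a h - (W + c) * b h < (r + c) * a h₀ - (W + c) * b h₀ :=
  fun _ hh ↦ stmt3_general a b (r + c) (W + c) h₀ (fun k _ ↦ hinc k) φ (fun k hk ↦ hφ k hk.1)
    (fun _ hk ↦ (hφmono hk ⟨hk.1.trans hk.2, le_rfl⟩ hk.2).trans_lt hlt) hh.le Set.self_mem_Iic hh
end
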